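/- Let g, c, φ, ψ : [0,a] → ℝ be continuously differentiable with g(u) > 0, c(u) > 0, φ'(u) > 0, η(u) := φ(u) − ψ(u) ∈ (−π/2, π/2), and c'(u)·cos η(u) = c(u)·φ'(u)·sin η(u) for all u; let f, z : [0,b] → ℝ be continuously differentiable with z'(v) > 0 for all v. Fix t ∈ ℝ with c(u)² + t > 0 and c(u)²cos²η(u) + t > 0 for all u, and z'(v)² − t·f'(v)² ≥ 0 for all v. Define φᵗ(u) = φ(0) + ∫₀ᵘ φ'(w)c(w)·√( c(w)² + t/cos²η(w) ) / (c(w)² + t) dw, ηᵗ(u) = arctan( c(u)·sin η(u) / √( c(u)²cos²η(u) + t ) ), ψᵗ = φᵗ − ηᵗ, γᵗ(u) = ∫₀ᵘ g(w)·(−sin ψᵗ(w), cos ψᵗ(w)) dw, ξᵗ(u) = √(c(u)²+t)·(cos φᵗ(u), sin φᵗ(u)), zᵗ(v) = z(0) + ∫₀ᵛ √( z'(w)² − t f'(w)² ) dw, and σᵗ(u,v) = ( γᵗ(u) + f(v)·ξᵗ(u), zᵗ(v) ) ∈ ℝ³. Then the first fundamental form of σᵗ is independent of t: for all (u,v), ‖σᵗ_u(u,v)‖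 = ‖σ⁰_u(u,v)‖, ⟪σᵗ_u(u,v), σᵗ_v(u,v)⟫ = ⟪σ⁰_u(u,v), σ⁰_v(u,v)⟫, and ‖σᵗ_v(u,v)‖ = ‖σ⁰_v(u,v)‖; moreover σ⁰ coincides with the T-surface (u,v) ↦ (γ(u) − γ(0) + f(v)ξ(u), z(v)), where γ'(u) = g(u)(−sin ψ(u), cos ψ(u)) and ξ(u) = c(u)(cos φ(u), sin φ(u)). Hence σᵗ is an isometric deformation of this T-surface within the class of T-surfaces. -/

import Mathlib

open Real Set

/-- A vector in Euclidean space `ℝ³` given by its three coordinates. -/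
noncomputable def e3 (x y z : ℝ) : EuclideanSpace ℝ (Fin 3) := !₂[x, y, z]

/-!
The conjugacy condition says that `ξ' = h • (−sin ψ, cos ψ)` with `h = c φ' / cos η`, i.e. `ξ'` is
parallel to `γ'`. Hence `σ_u = (g + f h) • (−sin ψ, cos ψ, 0)`, and the first fundamental form is
`E = (g + f h)²`, `F = f' (g + f h) · c sin η`, `G = c² f'² + z'²`.

The deformed data are those of a T-surface with the same `g`, `f` and `h`. The polar coordinates of
the point `(√(c² cos² η + t), c sin η)` are `√(c² + t)` and `ηᵗ`, so `c sin η` is preserved as well.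
Finally, the definition of `zᵗ` compensates the change `t f'²` of the first summand of `G`.
-/

section FundamentalTheorem

variable {E : Type*} [NormedAddCommGroup E] [NormedSpace ℝ E]
  {F F' F₁ F₂ : ℝ → E} {x₀ x₁ x : ℝ}

lemma integral_congr_of_eqOn_Icc (h : EqOn F₁ F₂ (Icc x₀ x₁)) (hx : x ∈ Icc x₀ x₁) :
    ∫ w in x₀..x, F₁ w = ∫ w in x₀..x, F₂ w := by
  refine intervalIntegral.integral_congr (h.mono ?_)
  rw [uIcc_of_le hx.1]
  exact Icc_subset_Icc_right hx.2

variable [CompleteSpace E]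

lemma hasDerivWithinAt_integral_Icc (hF : ContinuousOn F (Icc x₀ x₁)) (hx : x ∈ Icc x₀ x₁) :
    HasDerivWithinAt (fun y ↦ ∫ w in x₀..y, F w) (F x) (Icc x₀ x₁) x := by
  have : Fact (x ∈ Icc x₀ x₁) := ⟨hx⟩
  exact intervalIntegral.integral_hasDerivWithinAt_right
    ((hF.mono (Icc_subset_Icc_right hx.2)).intervalIntegrable_of_Icc hx.1)
    (hF.stronglyMeasurableAtFilter_nhdsWithin measurableSet_Icc x) (hF x hx)

lemma integral_eq_sub_of_hasDerivWithinAt_Icc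
    (hF : ∀ y ∈ Icc x₀ x₁, HasDerivWithinAt F (F' y) (Icc x₀ x₁) y)
    (hF' : ContinuousOn F' (Icc x₀ x₁)) (hx : x ∈ Icc x₀ x₁) :
    ∫ w in x₀..x, F' w = F x - F x₀ := by
  have hsub : Icc x₀ x ⊆ Icc x₀ x₁ := Icc_subset_Icc_right hx.2
  refine intervalIntegral.integral_eq_sub_of_hasDerivAt_of_le hx.1
    (fun y hy ↦ (hF y (hsub hy)).continuousWithinAt.mono hsub) (fun y hy ↦ ?_)
    ((hF'.mono hsub).intervalIntegrable_of_Icc hx.1)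
  exact (hF y (hsub (Ioo_subset_Icc_self hy))).hasDerivAt
    (Icc_mem_nhds hy.1 (hy.2.trans_le hx.2))

end FundamentalTheorem

section PolarCoordinates

variable {x y : ℝ}

lemma sqrt_one_add_div_sq (hx : 0 < x) : √(1 + (y / x) ^ 2) = √(x ^ 2 + y ^ 2) / x := by
  have hsq : 1 + (y / x) ^ 2 = (x ^ 2 + y ^ 2) / x ^ 2 := by field_simp
  rw [hsq, sqrt_div (by positivity), sqrt_sq hx.le]

lemma sqrt_mul_cos_arctan_div (hx : 0 < x) : √(x ^ 2 + y ^ 2) * cos (arctan (y / x)) = x := by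
  have : 0 < √(x ^ 2 + y ^ 2) := by positivity
  rw [cos_arctan, sqrt_one_add_div_sq hx]
  field_simp

lemma sqrt_mul_sin_arctan_div (hx : 0 < x) : √(x ^ 2 + y ^ 2) * sin (arctan (y / x)) = y := by
  have : 0 < √(x ^ 2 + y ^ 2) := by positivity
  rw [sin_arctan, sqrt_one_add_div_sq hx]
  field_simp

variable {ρ θ : ℝ → ℝ} {h θ' ψ u : ℝ} {s : Set ℝ}

lemma hasDerivWithinAt_mul_cos_of_radial_angular
    (hρ : HasDerivWithinAt ρ (h * sin (θ u - ψ)) s u) (hθ : HasDerivWithinAt θ θ' s u)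
    (hθ' : ρ u * θ' = h * cos (θ u - ψ)) :
    HasDerivWithinAt (fun x ↦ ρ x * cos (θ x)) (-(h * sin ψ)) s u := by
  refine (hρ.mul hθ.cos).congr_deriv ?_
  have hsin : sin ψ = sin (θ u) * cos (θ u - ψ) - cos (θ u) * sin (θ u - ψ) := by
    rw [← sin_sub, sub_sub_cancel]
  linear_combination -sin (θ u) * hθ' + h * hsin

lemma hasDerivWithinAt_mul_sin_of_radial_angular
    (hρ : HasDerivWithinAt ρ (h * sin (θ u - ψ)) s u) (hθ : HasDerivWithinAt θ θ' s u)
    (hθ' : ρ u * θ' = h * cos (θ u - ψ)) :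
    HasDerivWithinAt (fun x ↦ ρ x * sin (θ x)) (h * cos ψ) s u := by
  refine (hρ.mul hθ.sin).congr_deriv ?_
  have hcos : cos ψ = cos (θ u) * cos (θ u - ψ) + sin (θ u) * sin (θ u - ψ) := by
    rw [← cos_sub, sub_sub_cancel]
  linear_combination cos (θ u) * hθ' - h * hcos

end PolarCoordinates

lemma hasDerivWithinAt_e3 {x y z : ℝ → ℝ} {x' y' z' u : ℝ} {s : Set ℝ}
    (hx : HasDerivWithinAt x x' s u) (hy : HasDerivWithinAt y y' s u)
    (hz : HasDerivWithinAt z z' s u) :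
    HasDerivWithinAt (fun w ↦ e3 (x w) (y w) (z w)) (e3 x' y' z') s u := by
  have h : HasDerivWithinAt (fun w ↦ ![x w, y w, z w]) ![x', y', z'] s u := by
    rw [hasDerivWithinAt_pi]
    intro i
    fin_cases i <;> assumption
  exact ((EuclideanSpace.equiv (Fin 3) ℝ).symm : (Fin 3 → ℝ) →L[ℝ]
    EuclideanSpace ℝ (Fin 3)).hasFDerivAt.comp_hasDerivWithinAt u h

lemma inner_e3 (x y z x' y' z' : ℝ) :
    inner ℝ (e3 x y z) (e3 x' y' z') = x * x' + y * y' + z * z' := by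
  simp [e3, PiLp.inner_apply, Fin.sum_univ_three, mul_comm]

lemma norm_e3_sq (x y z : ℝ) : ‖e3 x y z‖ ^ 2 = x ^ 2 + y ^ 2 + z ^ 2 := by
  rw [← real_inner_self_eq_norm_sq, inner_e3]
  ring

section FirstFundamentalForm

variable {V : Type*} [NormedAddCommGroup V] [InnerProductSpace ℝ V] {σ τ : ℝ → ℝ → V}
  {s r : Set ℝ} {u v E F G : ℝ}

/-- The parametrized surface `σ` has partial derivatives at `(u, v)`, relative to `s` in the first
and to `r` in the second parameter, with first fundamental form `E du² + 2 F du dv + G dv²`. -/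
def HasFirstFundamentalFormWithinAt (σ : ℝ → ℝ → V) (s r : Set ℝ) (u v E F G : ℝ) : Prop :=
  ∃ σu σv : V, HasDerivWithinAt (fun u' ↦ σ u' v) σu s u ∧
    HasDerivWithinAt (fun v' ↦ σ u v') σv r v ∧
    ‖σu‖ ^ 2 = E ∧ inner ℝ σu σv = F ∧ ‖σv‖ ^ 2 = G

lemma HasFirstFundamentalFormWithinAt.exists_partialDeriv_norm_inner_eq
    (hσ : HasFirstFundamentalFormWithinAt σ s r u v E F G)
    (hτ : HasFirstFundamentalFormWithinAt τ s r u v E F G) :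
    ∃ σu σv τu τv : V,
      HasDerivWithinAt (fun u' ↦ σ u' v) σu s u ∧ HasDerivWithinAt (fun v' ↦ σ u v') σv r v ∧
      HasDerivWithinAt (fun u' ↦ τ u' v) τu s u ∧ HasDerivWithinAt (fun v' ↦ τ u v') τv r v ∧
      ‖σu‖ = ‖τu‖ ∧ inner ℝ σu σv = inner ℝ τu τv ∧ ‖σv‖ = ‖τv‖ := by
  obtain ⟨σu, σv, hσu, hσv, hσE, hσF, hσG⟩ := hσ
  obtain ⟨τu, τv, hτu, hτv, hτE, hτF, hτG⟩ := hτ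
  exact ⟨σu, σv, τu, τv, hσu, hσv, hτu, hτv,
    (pow_left_inj₀ (norm_nonneg _) (norm_nonneg _) two_ne_zero).1 (hσE.trans hτE.symm),
    hσF.trans hτF.symm,
    (pow_left_inj₀ (norm_nonneg _) (norm_nonneg _) two_ne_zero).1 (hσG.trans hτG.symm)⟩

end FirstFundamentalForm

section TSurface

/-- The T-surface `(u, v) ↦ (γ(u) + f(v) ξ(u), z(v))` with `γ' = g (−sin ψ, cos ψ)`, `γ(0) = 0` and
`ξ = ρ (cos θ, sin θ)`. The conjugacy condition is not part of the definition. -/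
noncomputable def tSurface (g ψ ρ θ f z : ℝ → ℝ) (u v : ℝ) : EuclideanSpace ℝ (Fin 3) :=
  e3 ((∫ w in (0 : ℝ)..u, -(g w * sin (ψ w))) + f v * ρ u * cos (θ u))
    ((∫ w in (0 : ℝ)..u, g w * cos (ψ w)) + f v * ρ u * sin (θ u)) (z v)

variable {g ψ ρ θ f z : ℝ → ℝ} {a u v h θ' f' z' : ℝ} {r : Set ℝ}

lemma tSurface_congr {ψ₁ ψ₂ ρ₁ ρ₂ θ₁ θ₂ z₁ z₂ : ℝ → ℝ} (hu : u ∈ Icc 0 a)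
    (hψ : EqOn ψ₁ ψ₂ (Icc 0 a)) (hρ : ρ₁ u = ρ₂ u) (hθ : θ₁ u = θ₂ u) (hz : z₁ v = z₂ v) :
    tSurface g ψ₁ ρ₁ θ₁ f z₁ u v = tSurface g ψ₂ ρ₂ θ₂ f z₂ u v := by
  have hsin := integral_congr_of_eqOn_Icc
    (fun w hw ↦ show -(g w * sin (ψ₁ w)) = -(g w * sin (ψ₂ w)) by rw [hψ hw]) hu
  have hcos := integral_congr_of_eqOn_Icc
    (fun w hw ↦ show g w * cos (ψ₁ w) = g w * cos (ψ₂ w) by rw [hψ hw]) hu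
  rw [tSurface, tSurface, hsin, hcos, hρ, hθ, hz]

lemma hasDerivWithinAt_tSurface_left (hg : ContinuousOn g (Icc 0 a))
    (hψ : ContinuousOn ψ (Icc 0 a)) (hu : u ∈ Icc 0 a)
    (hρ : HasDerivWithinAt ρ (h * sin (θ u - ψ u)) (Icc 0 a) u)
    (hθ : HasDerivWithinAt θ θ' (Icc 0 a) u) (hθ' : ρ u * θ' = h * cos (θ u - ψ u)) :
    HasDerivWithinAt (fun x ↦ tSurface g ψ ρ θ f z x v)
      (e3 (-((g u + f v * h) * sin (ψ u))) ((g u + f v * h) * cos (ψ u)) 0) (Icc 0 a) u := by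
  have hγ₁ := hasDerivWithinAt_integral_Icc (F := fun w ↦ -(g w * sin (ψ w)))
    (hg.mul (continuous_sin.comp_continuousOn hψ)).neg hu
  have hγ₂ := hasDerivWithinAt_integral_Icc (F := fun w ↦ g w * cos (ψ w))
    (hg.mul (continuous_cos.comp_continuousOn hψ)) hu
  have hξ₁ := hasDerivWithinAt_mul_cos_of_radial_angular hρ hθ hθ'
  have hξ₂ := hasDerivWithinAt_mul_sin_of_radial_angular hρ hθ hθ'
  simp only [tSurface, mul_assoc (f v)]
  refine hasDerivWithinAt_e3 ((hγ₁.add (hξ₁.const_mul (f v))).congr_deriv ?_)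
    ((hγ₂.add (hξ₂.const_mul (f v))).congr_deriv ?_) (hasDerivWithinAt_const _ _ _) <;> ring

lemma hasDerivWithinAt_tSurface_right (hf : HasDerivWithinAt f f' r v)
    (hz : HasDerivWithinAt z z' r v) :
    HasDerivWithinAt (fun y ↦ tSurface g ψ ρ θ f z u y)
      (e3 (f' * ρ u * cos (θ u)) (f' * ρ u * sin (θ u)) z') r v :=
  hasDerivWithinAt_e3 (((hf.mul_const _).mul_const _).const_add _)
    (((hf.mul_const _).mul_const _).const_add _) hz

/-- `h sin (θ − ψ)` and `h cos (θ − ψ)` are the radial and the angular component of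
`h (−sin ψ, cos ψ)`, so the hypotheses on `ρ` and `θ` say that `ξ' = h (−sin ψ, cos ψ)`. -/
lemma hasFirstFundamentalFormWithinAt_tSurface (hg : ContinuousOn g (Icc 0 a))
    (hψ : ContinuousOn ψ (Icc 0 a)) (hu : u ∈ Icc 0 a)
    (hρ : HasDerivWithinAt ρ (h * sin (θ u - ψ u)) (Icc 0 a) u)
    (hθ : HasDerivWithinAt θ θ' (Icc 0 a) u) (hθ' : ρ u * θ' = h * cos (θ u - ψ u))
    (hf : HasDerivWithinAt f f' r v) (hz : HasDerivWithinAt z z' r v) :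
    HasFirstFundamentalFormWithinAt (tSurface g ψ ρ θ f z) (Icc 0 a) r u v
      ((g u + f v * h) ^ 2) (f' * (g u + f v * h) * (ρ u * sin (θ u - ψ u)))
      (ρ u ^ 2 * f' ^ 2 + z' ^ 2) := by
  refine ⟨_, _, hasDerivWithinAt_tSurface_left hg hψ hu hρ hθ hθ',
    hasDerivWithinAt_tSurface_right hf hz, ?_, ?_, ?_⟩
  · rw [norm_e3_sq]
    linear_combination (g u + f v * h) ^ 2 * sin_sq_add_cos_sq (ψ u)
  · rw [inner_e3, sin_sub]
    ring
  · rw [norm_e3_sq]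
    linear_combination (f' * ρ u) ^ 2 * sin_sq_add_cos_sq (θ u)

end TSurface

section PointwiseDeformation

/-- The length `√(c² + t)` of the deformed vector `ξᵗ`. -/
noncomputable def deformedRadius (t c : ℝ) : ℝ := √(c ^ 2 + t)

/-- The deformed angle `ηᵗ = φᵗ − ψᵗ`, as a function of `c` and of the undeformed angle `η`. -/
noncomputable def deformedSlant (t c η : ℝ) : ℝ :=
  arctan (c * sin η / √(c ^ 2 * cos η ^ 2 + t))

/-- The derivative of the deformed polar angle `φᵗ`, as a function of `c`, of the derivative `φ'`
and of `η = φ − ψ`. -/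
noncomputable def deformedAngularSpeed (t c φ' η : ℝ) : ℝ :=
  φ' * c * √(c ^ 2 + t / cos η ^ 2) / (c ^ 2 + t)

variable {t c φ' η : ℝ}

lemma sq_add_eq_sqrt_sq_add_mul_sin_sq (ht : 0 < c ^ 2 * cos η ^ 2 + t) :
    c ^ 2 + t = √(c ^ 2 * cos η ^ 2 + t) ^ 2 + (c * sin η) ^ 2 := by
  rw [sq_sqrt ht.le]
  linear_combination -c ^ 2 * sin_sq_add_cos_sq η

lemma sq_add_pos_of_sq_mul_cos_sq_add_pos (ht : 0 < c ^ 2 * cos η ^ 2 + t) : 0 < c ^ 2 + t := by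
  rw [sq_add_eq_sqrt_sq_add_mul_sin_sq ht]
  positivity

lemma deformedRadius_mul_sin_deformedSlant (ht : 0 < c ^ 2 * cos η ^ 2 + t) :
    deformedRadius t c * sin (deformedSlant t c η) = c * sin η := by
  rw [deformedRadius, sq_add_eq_sqrt_sq_add_mul_sin_sq ht]
  exact sqrt_mul_sin_arctan_div (sqrt_pos.2 ht)

lemma deformedRadius_mul_cos_deformedSlant (ht : 0 < c ^ 2 * cos η ^ 2 + t) :
    deformedRadius t c * cos (deformedSlant t c η) = √(c ^ 2 * cos η ^ 2 + t) := by
  rw [deformedRadius, sq_add_eq_sqrt_sq_add_mul_sin_sq ht]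
  exact sqrt_mul_cos_arctan_div (sqrt_pos.2 ht)

lemma deformedRadius_mul_deformedAngularSpeed (hη : 0 < cos η)
    (ht : 0 < c ^ 2 * cos η ^ 2 + t) :
    deformedRadius t c * deformedAngularSpeed t c φ' η =
      c * φ' / cos η * cos (deformedSlant t c η) := by
  have hpos := sq_add_pos_of_sq_mul_cos_sq_add_pos ht
  have hρ : 0 < deformedRadius t c := sqrt_pos.2 hpos
  have hρ_sq : c ^ 2 + t = deformedRadius t c ^ 2 := (sq_sqrt hpos.le).symm
  have hsqrt : √(c ^ 2 + t / cos η ^ 2) = √(c ^ 2 * cos η ^ 2 + t) / cos η := by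
    have hsq : c ^ 2 + t / cos η ^ 2 = (c ^ 2 * cos η ^ 2 + t) / cos η ^ 2 := by field_simp
    rw [hsq, sqrt_div ht.le, sqrt_sq hη.le]
  rw [deformedAngularSpeed, hsqrt, ← deformedRadius_mul_cos_deformedSlant ht, hρ_sq]
  field_simp

lemma hasDerivWithinAt_deformedRadius {c : ℝ → ℝ} {c' u : ℝ} {s : Set ℝ}
    (hc : HasDerivWithinAt c c' s u) (hη : cos η ≠ 0) (hconj : c' * cos η = c u * φ' * sin η)
    (ht : 0 < c u ^ 2 * cos η ^ 2 + t) :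
    HasDerivWithinAt (fun x ↦ deformedRadius t (c x))
      (c u * φ' / cos η * sin (deformedSlant t (c u) η)) s u := by
  have hpos := sq_add_pos_of_sq_mul_cos_sq_add_pos ht
  have hρ : 0 < deformedRadius t (c u) := sqrt_pos.2 hpos
  have hsin : sin (deformedSlant t (c u) η) = c u * sin η / deformedRadius t (c u) := by
    rw [← deformedRadius_mul_sin_deformedSlant ht, mul_div_cancel_left₀ _ hρ.ne']
  have hc' : c' = c u * φ' * sin η / cos η := (eq_div_iff hη).2 hconj
  refine (((hc.pow 2).add_const t).sqrt hpos.ne').congr_deriv ?_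
  change _ / (2 * deformedRadius t (c u)) = _
  rw [hsin, hc']
  push_cast
  field_simp

lemma deformedRadius_zero (hc : 0 ≤ c) : deformedRadius 0 c = c := by
  rw [deformedRadius, add_zero, sqrt_sq hc]

lemma deformedSlant_zero (hc : 0 < c) (hη : η ∈ Ioo (-(π / 2)) (π / 2)) :
    deformedSlant 0 c η = η := by
  have hcos : 0 < cos η := cos_pos_of_mem_Ioo hη
  rw [deformedSlant, add_zero, ← mul_pow, sqrt_sq (by positivity), mul_div_mul_left _ _ hc.ne',
    ← tan_eq_sin_div_cos, arctan_tan hη.1 hη.2]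

lemma deformedAngularSpeed_zero (hc : 0 < c) : deformedAngularSpeed 0 c φ' η = φ' := by
  rw [deformedAngularSpeed, zero_div, add_zero, sqrt_sq hc.le]
  field_simp

end PointwiseDeformation

section Deformation

/-- The deformed polar angle `φᵗ`. -/
noncomputable def deformedPolarAngle (c φ ψ φ' : ℝ → ℝ) (t u : ℝ) : ℝ :=
  φ 0 + ∫ w in (0 : ℝ)..u, deformedAngularSpeed t (c w) (φ' w) (φ w - ψ w)

/-- The deformed tangent angle `ψᵗ = φᵗ − ηᵗ`. -/
noncomputable def deformedTangentAngle (c φ ψ φ' : ℝ → ℝ) (t u : ℝ) : ℝ :=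
  deformedPolarAngle c φ ψ φ' t u - deformedSlant t (c u) (φ u - ψ u)

/-- The deformed height `zᵗ`. -/
noncomputable def deformedHeight (f' z z' : ℝ → ℝ) (t v : ℝ) : ℝ :=
  z 0 + ∫ w in (0 : ℝ)..v, √(z' w ^ 2 - t * f' w ^ 2)

/-- The deformation `σᵗ` of the T-surface with data `g`, `c`, `φ`, `ψ`, `f`, `z`. The primed
functions stand for derivatives. -/
noncomputable def deformedTSurface (g c φ ψ φ' f f' z z' : ℝ → ℝ) (t : ℝ) :
    ℝ → ℝ → EuclideanSpace ℝ (Fin 3) :=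
  tSurface g (deformedTangentAngle c φ ψ φ' t) (fun u ↦ deformedRadius t (c u))
    (deformedPolarAngle c φ ψ φ' t) f (deformedHeight f' z z' t)

variable {g c φ ψ c' φ' f f' z z' : ℝ → ℝ} {a b t u v : ℝ}

lemma hasDerivWithinAt_deformedPolarAngle (hc : ContinuousOn c (Icc 0 a))
    (hφ : ContinuousOn φ (Icc 0 a)) (hψ : ContinuousOn ψ (Icc 0 a))
    (hφ' : ContinuousOn φ' (Icc 0 a)) (hη : ∀ w ∈ Icc 0 a, cos (φ w - ψ w) ≠ 0)
    (ht : ∀ w ∈ Icc 0 a, c w ^ 2 + t ≠ 0) (hu : u ∈ Icc 0 a) :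
    HasDerivWithinAt (deformedPolarAngle c φ ψ φ' t)
      (deformedAngularSpeed t (c u) (φ' u) (φ u - ψ u)) (Icc 0 a) u := by
  refine (hasDerivWithinAt_integral_Icc ?_ hu).const_add _
  have hcos : ContinuousOn (fun w ↦ cos (φ w - ψ w)) (Icc 0 a) :=
    continuous_cos.comp_continuousOn (hφ.sub hψ)
  exact ((hφ'.mul hc).mul ((hc.pow 2).add (continuousOn_const.div (hcos.pow 2)
    fun w hw ↦ pow_ne_zero 2 (hη w hw))).sqrt).div ((hc.pow 2).add continuousOn_const) ht

lemma continuousOn_deformedSlant {η : ℝ → ℝ} {s : Set ℝ} (hc : ContinuousOn c s)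
    (hη : ContinuousOn η s) (ht : ∀ w ∈ s, 0 < c w ^ 2 * cos (η w) ^ 2 + t) :
    ContinuousOn (fun w ↦ deformedSlant t (c w) (η w)) s :=
  continuous_arctan.comp_continuousOn <| (hc.mul (continuous_sin.comp_continuousOn hη)).div
    (((hc.pow 2).mul ((continuous_cos.comp_continuousOn hη).pow 2)).add continuousOn_const).sqrt
    fun w hw ↦ (sqrt_pos.2 (ht w hw)).ne'

lemma hasDerivWithinAt_deformedHeight (hf' : ContinuousOn f' (Icc 0 b))
    (hz' : ContinuousOn z' (Icc 0 b)) (hv : v ∈ Icc 0 b) :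
    HasDerivWithinAt (deformedHeight f' z z' t) (√(z' v ^ 2 - t * f' v ^ 2)) (Icc 0 b) v :=
  (hasDerivWithinAt_integral_Icc
    ((hz'.pow 2).sub (continuousOn_const.mul (hf'.pow 2))).sqrt hv).const_add _

lemma deformedPolarAngle_zero (hφ : ∀ w ∈ Icc 0 a, HasDerivWithinAt φ (φ' w) (Icc 0 a) w)
    (hφ' : ContinuousOn φ' (Icc 0 a)) (hc : ∀ w ∈ Icc 0 a, 0 < c w) (hu : u ∈ Icc 0 a) :
    deformedPolarAngle c φ ψ φ' 0 u = φ u := by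
  rw [deformedPolarAngle,
    integral_congr_of_eqOn_Icc (fun w hw ↦ deformedAngularSpeed_zero (hc w hw)) hu,
    integral_eq_sub_of_hasDerivWithinAt_Icc hφ hφ' hu, add_sub_cancel]

lemma deformedHeight_zero (hz : ∀ w ∈ Icc 0 b, HasDerivWithinAt z (z' w) (Icc 0 b) w)
    (hz' : ContinuousOn z' (Icc 0 b)) (hz'_nonneg : ∀ w ∈ Icc 0 b, 0 ≤ z' w)
    (hv : v ∈ Icc 0 b) : deformedHeight f' z z' 0 v = z v := by
  have hspeed : EqOn (fun w ↦ √(z' w ^ 2 - 0 * f' w ^ 2)) z' (Icc 0 b) := fun w hw ↦ by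
    simp only [zero_mul, sub_zero, sqrt_sq (hz'_nonneg w hw)]
  rw [deformedHeight, integral_congr_of_eqOn_Icc hspeed hv,
    integral_eq_sub_of_hasDerivWithinAt_Icc hz hz' hv, add_sub_cancel]

lemma deformedTSurface_zero (hφ : ∀ w ∈ Icc 0 a, HasDerivWithinAt φ (φ' w) (Icc 0 a) w)
    (hφ' : ContinuousOn φ' (Icc 0 a)) (hc : ∀ w ∈ Icc 0 a, 0 < c w)
    (hη : ∀ w ∈ Icc 0 a, φ w - ψ w ∈ Ioo (-(π / 2)) (π / 2))
    (hz : ∀ w ∈ Icc 0 b, HasDerivWithinAt z (z' w) (Icc 0 b) w)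
    (hz' : ContinuousOn z' (Icc 0 b)) (hz'_nonneg : ∀ w ∈ Icc 0 b, 0 ≤ z' w)
    (hu : u ∈ Icc 0 a) (hv : v ∈ Icc 0 b) :
    deformedTSurface g c φ ψ φ' f f' z z' 0 u v = tSurface g ψ c φ f z u v := by
  have hψ : EqOn (deformedTangentAngle c φ ψ φ' 0) ψ (Icc 0 a) := fun w hw ↦ by
    rw [deformedTangentAngle, deformedPolarAngle_zero hφ hφ' hc hw,
      deformedSlant_zero (hc w hw) (hη w hw), sub_sub_cancel]
  exact tSurface_congr hu hψ (deformedRadius_zero (hc u hu).le)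
    (deformedPolarAngle_zero hφ hφ' hc hu) (deformedHeight_zero hz hz' hz'_nonneg hv)

lemma hasFirstFundamentalFormWithinAt_deformedTSurface (hg : ContinuousOn g (Icc 0 a))
    (hc : ∀ w ∈ Icc 0 a, HasDerivWithinAt c (c' w) (Icc 0 a) w)
    (hφ : ContinuousOn φ (Icc 0 a)) (hψ : ContinuousOn ψ (Icc 0 a))
    (hφ' : ContinuousOn φ' (Icc 0 a)) (hη : ∀ w ∈ Icc 0 a, 0 < cos (φ w - ψ w))
    (hconj : ∀ w ∈ Icc 0 a, c' w * cos (φ w - ψ w) = c w * φ' w * sin (φ w - ψ w))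
    (hf : ∀ w ∈ Icc 0 b, HasDerivWithinAt f (f' w) (Icc 0 b) w)
    (hf' : ContinuousOn f' (Icc 0 b)) (hz' : ContinuousOn z' (Icc 0 b))
    (htc : ∀ w ∈ Icc 0 a, 0 < c w ^ 2 * cos (φ w - ψ w) ^ 2 + t)
    (htz : ∀ w ∈ Icc 0 b, 0 ≤ z' w ^ 2 - t * f' w ^ 2) (hu : u ∈ Icc 0 a) (hv : v ∈ Icc 0 b) :
    HasFirstFundamentalFormWithinAt (deformedTSurface g c φ ψ φ' f f' z z' t)
      (Icc 0 a) (Icc 0 b) u v ((g u + f v * (c u * φ' u / cos (φ u - ψ u))) ^ 2)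
      (f' v * (g u + f v * (c u * φ' u / cos (φ u - ψ u))) * (c u * sin (φ u - ψ u)))
      (c u ^ 2 * f' v ^ 2 + z' v ^ 2) := by
  have hc_cont : ContinuousOn c (Icc 0 a) := HasDerivWithinAt.continuousOn hc
  have hpos (w) (hw : w ∈ Icc 0 a) : 0 < c w ^ 2 + t :=
    sq_add_pos_of_sq_mul_cos_sq_add_pos (htc w hw)
  have hφt (w) (hw : w ∈ Icc 0 a) : HasDerivWithinAt (deformedPolarAngle c φ ψ φ' t)
      (deformedAngularSpeed t (c w) (φ' w) (φ w - ψ w)) (Icc 0 a) w :=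
    hasDerivWithinAt_deformedPolarAngle hc_cont hφ hψ hφ' (fun x hx ↦ (hη x hx).ne')
      (fun x hx ↦ (hpos x hx).ne') hw
  have hψt : ContinuousOn (deformedTangentAngle c φ ψ φ' t) (Icc 0 a) :=
    (HasDerivWithinAt.continuousOn hφt).sub (continuousOn_deformedSlant hc_cont (hφ.sub hψ) htc)
  have hslant : deformedPolarAngle c φ ψ φ' t u - deformedTangentAngle c φ ψ φ' t u =
      deformedSlant t (c u) (φ u - ψ u) := sub_sub_cancel _ _
  have hform := hasFirstFundamentalFormWithinAt_tSurface hg hψt hu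
    (by rw [hslant]
        exact hasDerivWithinAt_deformedRadius (hc u hu) (hη u hu).ne' (hconj u hu) (htc u hu))
    (hφt u hu)
    (by rw [hslant]; exact deformedRadius_mul_deformedAngularSpeed (hη u hu) (htc u hu))
    (hf v hv) (hasDerivWithinAt_deformedHeight (z := z) (t := t) hf' hz' hv)
  have hG : deformedRadius t (c u) ^ 2 * f' v ^ 2 + √(z' v ^ 2 - t * f' v ^ 2) ^ 2 =
      c u ^ 2 * f' v ^ 2 + z' v ^ 2 := by
    rw [deformedRadius, sq_sqrt (hpos u hu).le, sq_sqrt (htz v hv)]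
    ring
  rwa [hslant, deformedRadius_mul_sin_deformedSlant (htc u hu), hG] at hform

end Deformation

theorem stmt_17_general {g c φ ψ c' φ' f f' z z' : ℝ → ℝ} {a b t u v : ℝ}
    (hg : ContinuousOn g (Icc 0 a))
    (hc : ∀ w ∈ Icc 0 a, HasDerivWithinAt c (c' w) (Icc 0 a) w)
    (hφ : ∀ w ∈ Icc 0 a, HasDerivWithinAt φ (φ' w) (Icc 0 a) w)
    (hψ : ContinuousOn ψ (Icc 0 a)) (hφ' : ContinuousOn φ' (Icc 0 a))
    (hc_pos : ∀ w ∈ Icc 0 a, 0 < c w)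
    (hη : ∀ w ∈ Icc 0 a, φ w - ψ w ∈ Ioo (-(π / 2)) (π / 2))
    (hconj : ∀ w ∈ Icc 0 a, c' w * cos (φ w - ψ w) = c w * φ' w * sin (φ w - ψ w))
    (hf : ∀ w ∈ Icc 0 b, HasDerivWithinAt f (f' w) (Icc 0 b) w)
    (hz : ∀ w ∈ Icc 0 b, HasDerivWithinAt z (z' w) (Icc 0 b) w)
    (hf' : ContinuousOn f' (Icc 0 b)) (hz' : ContinuousOn z' (Icc 0 b))
    (hz'_nonneg : ∀ w ∈ Icc 0 b, 0 ≤ z' w)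
    (htc : ∀ w ∈ Icc 0 a, 0 < c w ^ 2 * cos (φ w - ψ w) ^ 2 + t)
    (htz : ∀ w ∈ Icc 0 b, 0 ≤ z' w ^ 2 - t * f' w ^ 2) (hu : u ∈ Icc 0 a) (hv : v ∈ Icc 0 b) :
    (∃ E F G,
      HasFirstFundamentalFormWithinAt (deformedTSurface g c φ ψ φ' f f' z z' t)
        (Icc 0 a) (Icc 0 b) u v E F G ∧
      HasFirstFundamentalFormWithinAt (deformedTSurface g c φ ψ φ' f f' z z' 0)
        (Icc 0 a) (Icc 0 b) u v E F G) ∧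
    deformedTSurface g c φ ψ φ' f f' z z' 0 u v = tSurface g ψ c φ f z u v := by
  have hcos (w) (hw : w ∈ Icc 0 a) : 0 < cos (φ w - ψ w) := cos_pos_of_mem_Ioo (hη w hw)
  have htc₀ (w) (hw : w ∈ Icc 0 a) : 0 < c w ^ 2 * cos (φ w - ψ w) ^ 2 + 0 := by
    have := hc_pos w hw
    have := hcos w hw
    positivity
  have htz₀ (w) (_ : w ∈ Icc 0 b) : 0 ≤ z' w ^ 2 - 0 * f' w ^ 2 := by
    rw [zero_mul, sub_zero]
    positivity
  have hφ_cont : ContinuousOn φ (Icc 0 a) := HasDerivWithinAt.continuousOn hφ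
  exact ⟨⟨_, _, _,
    hasFirstFundamentalFormWithinAt_deformedTSurface hg hc hφ_cont hψ hφ' hcos hconj hf hf' hz'
      htc htz hu hv,
    hasFirstFundamentalFormWithinAt_deformedTSurface hg hc hφ_cont hψ hφ' hcos hconj hf hf' hz'
      htc₀ htz₀ hu hv⟩,
    deformedTSurface_zero hφ hφ' hc_pos hη hz hz' hz'_nonneg hu hv⟩

/-- **Theorem 5.8.** The explicit isometric deformation of a general T-surface
`σ(u,v) = (γ(u) + f(v)ξ(u), z(v))` with `γ' = g(−sin ψ, cos ψ)`,
`ξ = c(cos φ, sin φ)` and conjugacy condition `c' cos η = c φ' sin η`, `η = φ − ψ`: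
the first fundamental form of the deformed surface `σᵗ` coincides with that of `σ⁰`, and
`σ⁰` is the original T-surface (with `γ` normalized by `γ(0) = 0`). -/
theorem stmt_17 (a b : ℝ)
    (g c φ ψ g' c' φ' ψ' f z f' z' : ℝ → ℝ)
    (hgd : ∀ u ∈ Icc 0 a, HasDerivWithinAt g (g' u) (Icc 0 a) u)
    (hcd : ∀ u ∈ Icc 0 a, HasDerivWithinAt c (c' u) (Icc 0 a) u)
    (hφd : ∀ u ∈ Icc 0 a, HasDerivWithinAt φ (φ' u) (Icc 0 a) u)
    (hψd : ∀ u ∈ Icc 0 a, HasDerivWithinAt ψ (ψ' u) (Icc 0 a) u)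
    (hg' : ContinuousOn g' (Icc 0 a)) (hc' : ContinuousOn c' (Icc 0 a))
    (hφ' : ContinuousOn φ' (Icc 0 a)) (hψ' : ContinuousOn ψ' (Icc 0 a))
    (hgpos : ∀ u ∈ Icc 0 a, 0 < g u) (hcpos : ∀ u ∈ Icc 0 a, 0 < c u)
    (hφ'pos : ∀ u ∈ Icc 0 a, 0 < φ' u)
    (hηr : ∀ u ∈ Icc 0 a, φ u - ψ u ∈ Set.Ioo (-(π / 2)) (π / 2))
    (hconj : ∀ u ∈ Icc 0 a, c' u * cos (φ u - ψ u) = c u * φ' u * sin (φ u - ψ u))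
    (hfd : ∀ v ∈ Icc 0 b, HasDerivWithinAt f (f' v) (Icc 0 b) v)
    (hzd : ∀ v ∈ Icc 0 b, HasDerivWithinAt z (z' v) (Icc 0 b) v)
    (hf' : ContinuousOn f' (Icc 0 b)) (hz' : ContinuousOn z' (Icc 0 b))
    (hz'pos : ∀ v ∈ Icc 0 b, 0 < z' v)
    (t : ℝ)
    (htc : ∀ u ∈ Icc 0 a, 0 < c u ^ 2 + t ∧ 0 < c u ^ 2 * cos (φ u - ψ u) ^ 2 + t)
    (htz : ∀ v ∈ Icc 0 b, 0 ≤ z' v ^ 2 - t * f' v ^ 2)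
    (φt ηt ψt : ℝ → ℝ → ℝ) (zt : ℝ → ℝ → ℝ)
    (hφt : ∀ s u, φt s u = φ 0 + ∫ w in (0:ℝ)..u,
        (φ' w * c w * Real.sqrt (c w ^ 2 + s / cos (φ w - ψ w) ^ 2)) / (c w ^ 2 + s))
    (hηt : ∀ s u, ηt s u = arctan
        (c u * sin (φ u - ψ u) / Real.sqrt (c u ^ 2 * cos (φ u - ψ u) ^ 2 + s)))
    (hψt : ∀ s u, ψt s u = φt s u - ηt s u)
    (hzt : ∀ s v, zt s v = z 0 + ∫ w in (0:ℝ)..v, Real.sqrt (z' w ^ 2 - s * f' w ^ 2))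
    (σ : ℝ → ℝ → ℝ → EuclideanSpace ℝ (Fin 3))
    (hσ : ∀ s u v, σ s u v =
      e3 ((∫ w in (0:ℝ)..u, -(g w * sin (ψt s w))) +
            f v * Real.sqrt (c u ^ 2 + s) * cos (φt s u))
         ((∫ w in (0:ℝ)..u, g w * cos (ψt s w)) +
            f v * Real.sqrt (c u ^ 2 + s) * sin (φt s u))
         (zt s v)) :
    ∀ u ∈ Icc 0 a, ∀ v ∈ Icc 0 b,
      -- the first fundamental form of σᵗ coincides with that of σ⁰
      (∃ su sv su0 sv0 : EuclideanSpace ℝ (Fin 3),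
        HasDerivWithinAt (fun u' => σ t u' v) su (Icc 0 a) u ∧
        HasDerivWithinAt (fun v' => σ t u v') sv (Icc 0 b) v ∧
        HasDerivWithinAt (fun u' => σ 0 u' v) su0 (Icc 0 a) u ∧
        HasDerivWithinAt (fun v' => σ 0 u v') sv0 (Icc 0 b) v ∧
        ‖su‖ = ‖su0‖ ∧ (inner ℝ su sv : ℝ) = inner ℝ su0 sv0 ∧ ‖sv‖ = ‖sv0‖) ∧
      -- σ⁰ is the original T-surface (γ(u) − γ(0) + f(v)ξ(u), z(v))
      σ 0 u v =
        e3 ((∫ w in (0:ℝ)..u, -(g w * sin (ψ w))) + f v * c u * cos (φ u))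
           ((∫ w in (0:ℝ)..u, g w * cos (ψ w)) + f v * c u * sin (φ u))
           (z v) := by
  simp only [hψt, hφt, hηt, hzt] at hσ
  obtain rfl : σ = deformedTSurface g c φ ψ φ' f f' z z' := funext fun s ↦ funext₂ (hσ s)
  intro u hu v hv
  obtain ⟨⟨E, F, G, hformt, hform₀⟩, hσ₀⟩ := stmt_17_general (HasDerivWithinAt.continuousOn hgd)
    hcd hφd (HasDerivWithinAt.continuousOn hψd) hφ' hcpos hηr hconj hfd hzd hf' hz'
    (fun w hw ↦ (hz'pos w hw).le) (fun w hw ↦ (htc w hw).2) htz hu hv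
  exact ⟨hformt.exists_partialDeriv_norm_inner_eq hform₀, hσ₀⟩
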